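/- For every ε > 0 and every pair G₀, G₁ : ℝ² → ℝ of C^∞ functions which are 1-periodic in both variables, there exists a symmetric tensor field h (a C^∞ map from ℝ³ to symmetric real 3×3 matrices, 1-periodic in the second and third variables) such that ∂₁(Ham h)(0,y,z) = G₀(y,z) and ∂₁(Ham h)(1,y,z) = G₁(y,z) for all (y,z) ∈ ℝ², and such that ∫_Σ Σ_{i,j} ( h_{ij}² + Σ_k (∂_k h_{ij})² ) < ε², ∫_Σ Σ_{i,j} (Ric h)_{ij}² < ε², and ∫_Σ ( (Ham h)² + Σ_k (∂_k Ham h)² ) < ε². -/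

import Mathlib

open MeasureTheory

/-- Partial derivative in the `i`-th coordinate direction (coordinates `x,y,z ↔ 0,1,2`). -/
noncomputable def pd (i : Fin 3) (f : (Fin 3 → ℝ) → ℝ) : (Fin 3 → ℝ) → ℝ :=
  fun p => fderiv ℝ f p (Pi.single i 1)

/-- 1-periodicity in the second and third variables. -/
def PerYZ (f : (Fin 3 → ℝ) → ℝ) : Prop :=
  ∀ p : Fin 3 → ℝ, f (p + Pi.single 1 1) = f p ∧ f (p + Pi.single 2 1) = f p

/-- 1-periodicity in both variables, for functions on `ℝ²`. -/
def PerBoth {α : Type*} (G : (Fin 2 → ℝ) → α) : Prop :=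
  ∀ q : Fin 2 → ℝ, G (q + Pi.single 0 1) = G q ∧ G (q + Pi.single 1 1) = G q

/-- The unit cube in `ℝ³`, the fundamental domain of `Σ = (0,1) × T²`. -/
def Cube : Set (Fin 3 → ℝ) := Set.Icc 0 1

/-- The linearized Ricci operator
`(Ric h)_{ij} = ½(∂ᵢ∂ₐh_{jа} + ∂ⱼ∂ₐh_{ia} - ∂ₐ∂ₐh_{ij} - ∂ᵢ∂ⱼh_{aa})`. -/
noncomputable def ricT (h : Fin 3 → Fin 3 → (Fin 3 → ℝ) → ℝ) (i j : Fin 3) :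
    (Fin 3 → ℝ) → ℝ :=
  fun p => (∑ a, (pd i (pd a (h j a)) p + pd j (pd a (h i a)) p
    - pd a (pd a (h i j)) p - pd i (pd j (h a a)) p)) / 2

/-- The linearized Hamiltonian operator `Ham h = ½(∂ᵢ∂ⱼh_{ij} - ∂ₐ∂ₐh_{jj})`. -/
noncomputable def hamT (h : Fin 3 → Fin 3 → (Fin 3 → ℝ) → ℝ) : (Fin 3 → ℝ) → ℝ :=
  fun p => ((∑ i, ∑ j, pd i (pd j (h i j)) p) - ∑ a, ∑ j, pd a (pd a (h j j)) p) / 2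

open Filter Topology

def Good (u : ℕ → (Fin 3 → ℝ) → ℝ) : Prop :=
  (∀ n, ContDiff ℝ (⊤ : ℕ∞) (u n)) ∧ (∃ M, ∀ n, ∀ p ∈ Cube, |u n p| ≤ M) ∧
    ∀ p : Fin 3 → ℝ, 0 < p 0 → p 0 < 1 → Tendsto (fun n => u n p) atTop (𝓝 0)

lemma Good.zero : Good (fun _ _ => 0) :=
  ⟨fun _ => contDiff_const, ⟨0, by simp⟩, fun _ _ _ => tendsto_const_nhds⟩

lemma Good.add {u v} (hu : Good u) (hv : Good v) : Good (fun n p => u n p + v n p) := by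
  obtain ⟨a, ⟨M, b⟩, c⟩ := hu
  obtain ⟨a', ⟨M', b'⟩, c'⟩ := hv
  refine ⟨fun n => (a n).add (a' n), ⟨M + M', fun n p hp => ?_⟩, fun p h0 h1 => ?_⟩
  · exact (abs_add_le _ _).trans (add_le_add (b n p hp) (b' n p hp))
  · simpa using (c p h0 h1).add (c' p h0 h1)

lemma Good.mul {u v} (hu : Good u) (hv : Good v) : Good (fun n p => u n p * v n p) := by
  obtain ⟨a, ⟨M, b⟩, c⟩ := hu
  obtain ⟨a', ⟨M', b'⟩, c'⟩ := hv
  refine ⟨fun n => (a n).mul (a' n), ⟨M * M', fun n p hp => ?_⟩, fun p h0 h1 => ?_⟩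
  · rw [abs_mul]
    exact mul_le_mul (b n p hp) (b' n p hp) (abs_nonneg _) ((abs_nonneg _).trans (b n p hp))
  · simpa using (c p h0 h1).mul (c' p h0 h1)

lemma Good.sq {u} (hu : Good u) : Good (fun n p => u n p ^ 2) := by
  simpa only [pow_two] using hu.mul hu

lemma Good.cmul {u} (r : ℝ) (hu : Good u) : Good (fun n p => r * u n p) := by
  obtain ⟨a, ⟨M, b⟩, c⟩ := hu
  refine ⟨fun n => contDiff_const.mul (a n), ⟨|r| * M, fun n p hp => ?_⟩, fun p h0 h1 => ?_⟩
  · rw [abs_mul]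
    exact mul_le_mul_of_nonneg_left (b n p hp) (abs_nonneg _)
  · simpa using (c p h0 h1).const_mul r

lemma Good.sum {ι : Type*} (s : Finset ι) {u : ι → ℕ → (Fin 3 → ℝ) → ℝ}
    (hu : ∀ i ∈ s, Good (u i)) : Good (fun n p => ∑ i ∈ s, u i n p) := by
  classical
  induction s using Finset.induction_on with
  | empty => simpa using Good.zero
  | insert a s ha ih =>
    simp only [Finset.sum_insert ha]
    exact (hu a (by simp)).add (ih fun i hi => hu i (by simp [hi]))

lemma Good.integral {u} (hu : Good u) : Tendsto (fun n => ∫ p in Cube, u n p) atTop (𝓝 0) := by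
  obtain ⟨a, ⟨M, b⟩, c⟩ := hu
  have hm : MeasurableSet Cube := measurableSet_Icc
  have hfin : volume Cube ≠ ⊤ := (isCompact_Icc (a := (0 : Fin 3 → ℝ)) (b := 1)).measure_lt_top.ne
  have h := tendsto_integral_of_dominated_convergence (μ := volume.restrict Cube)
    (F := u) (f := fun _ => (0:ℝ)) (fun _ => M)
    (fun n => (a n).continuous.aestronglyMeasurable)
    (integrableOn_const hfin)
    (fun n => (ae_restrict_iff' hm).2 (ae_of_all _ fun p hp => b n p hp))
    (by
      rw [ae_restrict_iff' hm]
      have e0 : ∀ᵐ p : Fin 3 → ℝ, p 0 ≠ 0 := by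
        rw [ae_iff]
        simp only [ne_eq, not_not]
        exact Measure.pi_hyperplane (fun _ : Fin 3 => (volume : Measure ℝ)) 0 0
      have e1 : ∀ᵐ p : Fin 3 → ℝ, p 0 ≠ 1 := by
        rw [ae_iff]
        simp only [ne_eq, not_not]
        exact Measure.pi_hyperplane (fun _ : Fin 3 => (volume : Measure ℝ)) 0 1
      filter_upwards [e0, e1] with p h0 h1 hp
      exact c p (lt_of_le_of_ne (hp.1 0) (Ne.symm h0)) (lt_of_le_of_ne (hp.2 0) h1))
  simpa using h

lemma pd_smooth {f} (i : Fin 3) (hf : ContDiff ℝ (⊤ : ℕ∞) f) : ContDiff ℝ (⊤ : ℕ∞) (pd i f) :=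
  (hf.fderiv_right (m := (⊤ : ℕ∞)) (by simp)).clm_apply contDiff_const

lemma sm_diff {E : Type*} [NormedAddCommGroup E] [NormedSpace ℝ E] {f : E → ℝ}
    (hf : ContDiff ℝ (⊤ : ℕ∞) f) : Differentiable ℝ f :=
  hf.differentiable (by simp)

lemma pd_add {f g} (i : Fin 3) (hf : ContDiff ℝ (⊤ : ℕ∞) f) (hg : ContDiff ℝ (⊤ : ℕ∞) g) :
    pd i (fun p => f p + g p) = fun p => pd i f p + pd i g p := by
  funext p
  have := fderiv_fun_add (sm_diff hf p) (sm_diff hg p)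
  simp [pd, this]

lemma pd_cmul {f} (i : Fin 3) (r : ℝ) (hf : ContDiff ℝ (⊤ : ℕ∞) f) :
    pd i (fun p => r * f p) = fun p => r * pd i f p := by
  funext p
  have := fderiv_const_mul (sm_diff hf p) r
  simp [pd, this]

lemma pd_zero (i : Fin 3) : pd i (fun _ => 0) = fun _ => 0 := by
  funext p; simp [pd]

def K : ℕ → (ℕ → (Fin 3 → ℝ) → ℝ) → Prop
  | 0, u => Good u
  | k + 1, u => Good u ∧ ∀ i, K k (fun n => pd i (u n))

lemma K.good {k u} (h : K k u) : Good u := by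
  cases k with
  | zero => exact h
  | succ k => exact h.1

lemma K.zero (k) : K k (fun _ _ => 0) := by
  induction k with
  | zero => exact Good.zero
  | succ k ih => exact ⟨Good.zero, fun i => by simpa only [pd_zero] using ih⟩

lemma K.add {k u v} (hu : K k u) (hv : K k v) : K k (fun n p => u n p + v n p) := by
  induction k generalizing u v with
  | zero => exact Good.add hu hv
  | succ k ih =>
    refine ⟨Good.add hu.1 hv.1, fun i => ?_⟩
    have := ih (hu.2 i) (hv.2 i)
    simpa only [pd_add i (hu.1.1 _) (hv.1.1 _)] using this

lemma K.cmul {k u} (r : ℝ) (hu : K k u) : K k (fun n p => r * u n p) := by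
  induction k generalizing u with
  | zero => exact Good.cmul r hu
  | succ k ih =>
    refine ⟨Good.cmul r hu.1, fun i => ?_⟩
    simpa only [pd_cmul i r (hu.1.1 _)] using ih (hu.2 i)

lemma K.sub {k u v} (hu : K k u) (hv : K k v) : K k (fun n p => u n p - v n p) := by
  have := hu.add (hv.cmul (-1))
  simpa only [neg_one_mul, ← sub_eq_add_neg] using this

lemma K.half {k u} (hu : K k u) : K k (fun n p => u n p / 2) := by
  have := hu.cmul (1/2)
  have e : ∀ x : ℝ, (1/2) * x = x / 2 := fun x => by ring
  simpa only [e] using this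

lemma K.sum {ι : Type*} {k} (s : Finset ι) {u : ι → ℕ → (Fin 3 → ℝ) → ℝ}
    (hu : ∀ i ∈ s, K k (u i)) : K k (fun n p => ∑ i ∈ s, u i n p) := by
  classical
  induction s using Finset.induction_on with
  | empty => simpa using K.zero k
  | insert a s ha ih =>
    simp only [Finset.sum_insert ha]
    exact (hu a (by simp)).add (ih fun i hi => hu i (by simp [hi]))

def T (f : ℝ → ℝ) (G : (Fin 2 → ℝ) → ℝ) : (Fin 3 → ℝ) → ℝ := fun p => f (p 0) * G ![p 1, p 2]

noncomputable def qd (i : Fin 2) (f : (Fin 2 → ℝ) → ℝ) : (Fin 2 → ℝ) → ℝ :=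
  fun p => fderiv ℝ f p (Pi.single i 1)

lemma qd_smooth {f} (i : Fin 2) (hf : ContDiff ℝ (⊤ : ℕ∞) f) : ContDiff ℝ (⊤ : ℕ∞) (qd i f) :=
  (hf.fderiv_right (m := (⊤ : ℕ∞)) (by simp)).clm_apply contDiff_const

def prj : (Fin 3 → ℝ) →L[ℝ] (Fin 2 → ℝ) :=
  ContinuousLinearMap.pi ![ContinuousLinearMap.proj 1, ContinuousLinearMap.proj 2]

lemma prj_apply (p : Fin 3 → ℝ) : prj p = ![p 1, p 2] := by
  funext i; fin_cases i <;> rfl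

lemma T_eq (f G) : T f G = fun p => f (p 0) * G (prj p) := by
  funext p; simp [T, prj_apply]

lemma T_smooth {f G} (hf : ContDiff ℝ (⊤ : ℕ∞) f) (hG : ContDiff ℝ (⊤ : ℕ∞) G) :
    ContDiff ℝ (⊤ : ℕ∞) (T f G) := by
  rw [T_eq]
  exact (hf.comp (contDiff_apply ℝ ℝ 0)).mul (hG.comp prj.contDiff)

lemma T_hasFDerivAt {f f' : ℝ → ℝ} {G} (hf : ∀ x, HasDerivAt f (f' x) x)
    (hG : ContDiff ℝ (⊤ : ℕ∞) G) (p : Fin 3 → ℝ) (v : Fin 3 → ℝ) :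
    fderiv ℝ (T f G) p v = f (p 0) * fderiv ℝ G (prj p) (prj v) + f' (p 0) * v 0 * G (prj p) := by
  rw [T_eq]
  have h1 : HasFDerivAt (fun p : Fin 3 → ℝ => f (p 0)) _ p :=
    (hf (p 0)).hasFDerivAt.comp p (hasFDerivAt_apply (𝕜 := ℝ) (0 : Fin 3) p)
  have h2 : HasFDerivAt (fun p : Fin 3 → ℝ => G (prj p)) _ p :=
    (sm_diff hG (prj p)).hasFDerivAt.comp p prj.hasFDerivAt
  rw [(h1.fun_mul h2).fderiv]
  simp
  ring

lemma pd0_T {f f' : ℝ → ℝ} {G} (hf : ∀ x, HasDerivAt f (f' x) x)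
    (hG : ContDiff ℝ (⊤ : ℕ∞) G) : pd 0 (T f G) = T f' G := by
  funext p
  have e : prj (Pi.single 0 1) = 0 := by
    rw [prj_apply]; funext i; fin_cases i <;> simp
  rw [pd, T_hasFDerivAt hf hG, e, T_eq]; simp

lemma pd1_T {f f' : ℝ → ℝ} {G} (hf : ∀ x, HasDerivAt f (f' x) x)
    (hG : ContDiff ℝ (⊤ : ℕ∞) G) : pd 1 (T f G) = T f (qd 0 G) := by
  funext p
  have e : prj (Pi.single 1 1) = Pi.single 0 1 := by
    rw [prj_apply]; funext i; fin_cases i <;> simp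
  rw [pd, T_hasFDerivAt hf hG, e, T_eq]; simp [qd]

lemma pd2_T {f f' : ℝ → ℝ} {G} (hf : ∀ x, HasDerivAt f (f' x) x)
    (hG : ContDiff ℝ (⊤ : ℕ∞) G) : pd 2 (T f G) = T f (qd 1 G) := by
  funext p
  have e : prj (Pi.single 2 1) = Pi.single 1 1 := by
    rw [prj_apply]; funext i; fin_cases i <;> simp
  rw [pd, T_hasFDerivAt hf hG, e, T_eq]; simp [qd]

lemma T_per {f G} (hG : PerBoth G) : PerYZ (T f G) := by
  intro p
  have e1 : ∀ p : Fin 3 → ℝ, prj (p + Pi.single 1 1) = prj p + Pi.single 0 1 := by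
    intro p; simp only [prj_apply]; funext i; fin_cases i <;> simp
  have e2 : ∀ p : Fin 3 → ℝ, prj (p + Pi.single 2 1) = prj p + Pi.single 1 1 := by
    intro p; simp only [prj_apply]; funext i; fin_cases i <;> simp
  rw [T_eq]
  simp only [e1, e2, (hG _).1, (hG _).2]
  simp

/-- one-dimensional good chains -/
structure Chain (F : ℕ → ℕ → ℝ → ℝ) : Prop where
  smooth : ∀ m n, ContDiff ℝ (⊤ : ℕ∞) (F m n)
  der : ∀ m n x, HasDerivAt (F m n) (F (m + 1) n x) x
  bdd : ∀ m, m ≤ 3 → ∃ M, ∀ n, ∀ x, 0 ≤ x → x ≤ 1 → |F m n x| ≤ M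
  lim : ∀ m, m ≤ 3 → ∀ x, 0 < x → x < 1 → Tendsto (fun n => F m n x) atTop (𝓝 0)

lemma Chain.goodT {F G} (hF : Chain F) (hG : ContDiff ℝ (⊤ : ℕ∞) G) (m : ℕ) (hm : m ≤ 3) :
    Good (fun n => T (F m n) G) := by
  obtain ⟨M, hM⟩ := hF.bdd m hm
  obtain ⟨C, hC⟩ := (isCompact_Icc (a := (0 : Fin 3 → ℝ)) (b := 1)).exists_bound_of_continuousOn
    (f := fun p => G (prj p)) (hG.continuous.comp prj.continuous).continuousOn
  refine ⟨fun n => T_smooth (hF.smooth m n) hG, ⟨M * C, fun n p hp => ?_⟩, fun p h0 h1 => ?_⟩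
  · have a := hM n (p 0) (hp.1 0) (hp.2 0)
    change |F m n (p 0) * G ![p 1, p 2]| ≤ _
    rw [abs_mul, ← prj_apply]
    exact mul_le_mul a (hC p hp) (abs_nonneg _) ((abs_nonneg _).trans a)
  · simpa [T] using (hF.lim m hm (p 0) h0 h1).mul_const (G ![p 1, p 2])

lemma Chain.KT {F G} (hF : Chain F) (hG : ContDiff ℝ (⊤ : ℕ∞) G) (k m : ℕ) (hm : m + k ≤ 3) :
    K k (fun n => T (F m n) G) := by
  induction k generalizing m G with
  | zero => exact hF.goodT hG m hm
  | succ k ih =>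
    refine ⟨hF.goodT hG m (by omega), fun i => ?_⟩
    fin_cases i
    · simpa only [Fin.zero_eta, pd0_T (hF.der m _) hG] using ih hG (m + 1) (by omega)
    · simpa only [Fin.mk_one, pd1_T (hF.der m _) hG] using ih (qd_smooth 0 hG) m (by omega)
    · simpa only [Fin.reduceFinMk, pd2_T (hF.der m _) hG] using ih (qd_smooth 1 hG) m (by omega)

lemma pow_aux (t : ℝ) (h0 : 0 ≤ t) (h1 : t ≤ 1) (m : ℕ) : m * t ^ m * (1 - t) ≤ 1 - t ^ m := by
  induction m with
  | zero => simp
  | succ m ih =>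
    have a : 0 ≤ (1 - t) * (1 - t ^ (m+1)) :=
      mul_nonneg (by linarith) (by linarith [pow_le_one₀ (n := m+1) h0 h1])
    have b := mul_le_mul_of_nonneg_left ih h0
    push_cast
    rw [pow_succ] at *
    nlinarith

noncomputable def F0 (n : ℕ) (x : ℝ) : ℝ :=
  ((1 - x) ^ (n + 5) / (n + 5) - (1 - x) ^ (n + 4) / (n + 4)) / (2 * (n + 3))
noncomputable def F1 (n : ℕ) (x : ℝ) : ℝ :=
  ((1 - x) ^ (n + 3) - (1 - x) ^ (n + 4)) / (2 * (n + 3))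
noncomputable def F2 (n : ℕ) (x : ℝ) : ℝ :=
  ((n + 4) * (1 - x) ^ (n + 3) - (n + 3) * (1 - x) ^ (n + 2)) / (2 * (n + 3))
noncomputable def F3 (n : ℕ) (x : ℝ) : ℝ :=
  ((n + 2) * (1 - x) ^ (n + 1) - (n + 4) * (1 - x) ^ (n + 2)) / 2

lemma hpow (k : ℕ) (x : ℝ) :
    HasDerivAt (fun x : ℝ => (1 - x) ^ (k + 1)) (-((k + 1) * (1 - x) ^ k)) x := by
  have := ((hasDerivAt_id x).const_sub 1).pow (k + 1)
  refine HasDerivAt.congr_deriv (f := fun x : ℝ => (1 - x) ^ (k + 1)) this ?_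
  simp

lemma F0_der (n x) : HasDerivAt (F0 n) (F1 n x) x := by
  have h := (((hpow (n+4) x).div_const ((n:ℝ) + 5)).sub
    ((hpow (n+3) x).div_const ((n:ℝ) + 4))).div_const (2 * ((n:ℝ) + 3))
  refine HasDerivAt.congr_deriv (f := F0 n) h ?_
  have : (n:ℝ) + 5 ≠ 0 := by positivity
  have : (n:ℝ) + 4 ≠ 0 := by positivity
  have : (n:ℝ) + 3 ≠ 0 := by positivity
  simp only [F1]; push_cast; field_simp; ring

lemma F1_der (n x) : HasDerivAt (F1 n) (F2 n x) x := by
  have h := ((hpow (n+2) x).sub (hpow (n+3) x)).div_const (2 * ((n:ℝ) + 3))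
  refine HasDerivAt.congr_deriv (f := F1 n) h ?_
  simp only [F2]; push_cast; ring

lemma F2_der (n x) : HasDerivAt (F2 n) (F3 n x) x := by
  have h := (((hpow (n+2) x).const_mul ((n:ℝ) + 4)).sub
    ((hpow (n+1) x).const_mul ((n:ℝ) + 3))).div_const (2 * ((n:ℝ) + 3))
  refine HasDerivAt.congr_deriv (f := F2 n) h ?_
  have : (n:ℝ) + 3 ≠ 0 := by positivity
  simp only [F3]; push_cast; field_simp; ring

lemma F0_smooth (n) : ContDiff ℝ (⊤ : ℕ∞) (F0 n) := by
  unfold F0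
  fun_prop

noncomputable def FF (m n : ℕ) : ℝ → ℝ := deriv^[m] (F0 n)

lemma FF1 (n) : FF 1 n = F1 n := by
  funext x; simp [FF, (F0_der n x).deriv]
lemma FF2 (n) : FF 2 n = F2 n := by
  have : FF 2 n = deriv (FF 1 n) := by rfl
  rw [this, FF1]; funext x; exact (F1_der n x).deriv
lemma FF3 (n) : FF 3 n = F3 n := by
  have : FF 3 n = deriv (FF 2 n) := by rfl
  rw [this, FF2]; funext x; exact (F2_der n x).deriv

lemma FF_smooth (m n) : ContDiff ℝ (⊤ : ℕ∞) (FF m n) := by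
  exact (F0_smooth n).iterate_deriv m

lemma FF_der (m n x) : HasDerivAt (FF m n) (FF (m + 1) n x) x := by
  have : FF (m + 1) n = deriv (FF m n) := by
    simp only [FF, Function.iterate_succ_apply']
  rw [this]
  exact (sm_diff (FF_smooth m n) x).hasDerivAt

lemma FF_bdd (m : ℕ) (hm : m ≤ 3) (n : ℕ) (x : ℝ) (h0 : 0 ≤ x) (h1 : x ≤ 1) :
    |FF m n x| ≤ 3 := by
  have t0 : 0 ≤ 1 - x := by linarith
  have t1 : 1 - x ≤ 1 := by linarith
  have p0 : ∀ k, 0 ≤ (1 - x) ^ k := fun k => pow_nonneg t0 k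
  have p1 : ∀ k, (1 - x) ^ k ≤ 1 := fun k => pow_le_one₀ t0 t1
  have hn : (0:ℝ) ≤ n := n.cast_nonneg
  interval_cases m
  · change |F0 n x| ≤ 3
    have a0 : 0 ≤ (1 - x) ^ (n + 5) / ((n:ℝ) + 5) := div_nonneg (p0 _) (by positivity)
    have a1 : (1 - x) ^ (n + 5) / ((n:ℝ) + 5) ≤ 1 := by
      rw [div_le_one (by positivity)]; linarith [p1 (n+5)]
    have b0 : 0 ≤ (1 - x) ^ (n + 4) / ((n:ℝ) + 4) := div_nonneg (p0 _) (by positivity)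
    have b1 : (1 - x) ^ (n + 4) / ((n:ℝ) + 4) ≤ 1 := by
      rw [div_le_one (by positivity)]; linarith [p1 (n+4)]
    rw [F0, abs_div, abs_of_pos (show (0:ℝ) < 2 * (n + 3) by positivity), div_le_iff₀ (by positivity),
      abs_le]
    constructor <;> nlinarith
  · rw [FF1, F1, abs_div, abs_of_pos (show (0:ℝ) < 2 * (n + 3) by positivity),
      div_le_iff₀ (by positivity), abs_le]
    constructor <;> nlinarith [p0 (n+3), p1 (n+3), p0 (n+4), p1 (n+4)]
  · rw [FF2, F2, abs_div, abs_of_pos (show (0:ℝ) < 2 * (n + 3) by positivity),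
      div_le_iff₀ (by positivity), abs_le]
    have a := p0 (n+3)
    have b := p1 (n+3)
    have c := p0 (n+2)
    have d := p1 (n+2)
    constructor <;> nlinarith [mul_nonneg hn a, mul_nonneg hn c, mul_nonneg hn (sub_nonneg.2 b),
      mul_nonneg hn (sub_nonneg.2 d)]
  · rw [FF3, F3, abs_div, abs_of_pos (show (0:ℝ) < 2 by positivity),
      div_le_iff₀ (by positivity), abs_le]
    have q := pow_aux (1 - x) t0 t1 (n + 1)
    have q0 : 0 ≤ ((n + 1 : ℕ) : ℝ) * (1 - x) ^ (n + 1) * (1 - (1 - x)) :=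
      mul_nonneg (mul_nonneg (by positivity) (p0 _)) (by linarith)
    have e : ((n:ℝ) + 2) * (1 - x) ^ (n + 1) - (n + 4) * (1 - x) ^ (n + 2)
      = ((n + 1 : ℕ) : ℝ) * (1 - x) ^ (n + 1) * (1 - (1 - x)) + (1 - x) ^ (n + 1)
        - 3 * (1 - x) ^ (n + 2) := by push_cast; ring
    rw [e]
    constructor <;> linarith [p0 (n+1), p1 (n+1), p0 (n+2), p1 (n+2)]

lemma FF_lim (m : ℕ) (hm : m ≤ 3) (x : ℝ) (h0 : 0 < x) (h1 : x < 1) :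
    Tendsto (fun n => FF m n x) atTop (𝓝 0) := by
  have t0 : 0 ≤ 1 - x := by linarith
  have t1 : 1 - x < 1 := by linarith
  have A : ∀ k, Tendsto (fun n : ℕ => (1 - x) ^ (n + k)) atTop (𝓝 0) := fun k =>
    (tendsto_add_atTop_iff_nat k).2 (tendsto_pow_atTop_nhds_zero_of_lt_one t0 t1)
  have B : ∀ k (c : ℝ), Tendsto (fun n : ℕ => ((n:ℝ) + c) * (1 - x) ^ (n + k)) atTop (𝓝 0) := by
    intro k c
    have h := ((tendsto_self_mul_const_pow_of_lt_one t0 t1).mul_const ((1 - x) ^ k)).add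
      ((A k).const_mul c)
    simp only [zero_mul, mul_zero, add_zero] at h
    refine h.congr fun n => ?_
    rw [pow_add]; ring
  have C : ∀ c : ℝ, Tendsto (fun n : ℕ => ((n:ℝ) + c)⁻¹) atTop (𝓝 0) := fun c =>
    tendsto_inv_atTop_zero.comp (tendsto_atTop_add_const_right _ _ tendsto_natCast_atTop_atTop)
  have D : Tendsto (fun n : ℕ => (2 * ((n:ℝ) + 3))⁻¹) atTop (𝓝 0) := by
    simpa [mul_inv, mul_comm] using (C 3).mul_const (2⁻¹)
  interval_cases m
  · change Tendsto (fun n => F0 n x) atTop (𝓝 0)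
    simpa [F0, div_eq_mul_inv] using (((A 5).mul (C 5)).sub ((A 4).mul (C 4))).mul D
  · simp only [FF1, F1, div_eq_mul_inv]
    simpa using ((A 3).sub (A 4)).mul D
  · simp only [FF2, F2, div_eq_mul_inv]
    simpa using ((B 3 4).sub (B 2 3)).mul D
  · simp only [FF3, F3, div_eq_mul_inv]
    simpa using ((B 1 2).sub (B 2 4)).mul_const (2⁻¹)

lemma chainFF : Chain FF :=
  ⟨FF_smooth, FF_der, fun m hm => ⟨3, fun n x => FF_bdd m hm n x⟩, FF_lim⟩

noncomputable def GG (m n : ℕ) (x : ℝ) : ℝ := (-1) ^ (m + 1) * FF m n (1 - x)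

lemma chainGG : Chain GG := by
  refine ⟨fun m n => ?_, fun m n x => ?_, fun m hm => ⟨3, fun n x h0 h1 => ?_⟩,
    fun m hm x h0 h1 => ?_⟩
  · exact contDiff_const.mul ((FF_smooth m n).comp (contDiff_const.sub contDiff_id))
  · have := ((FF_der m n (1 - x)).comp x ((hasDerivAt_id x).const_sub 1)).const_mul
      ((-1 : ℝ) ^ (m + 1))
    refine HasDerivAt.congr_deriv (f := GG m n) this ?_
    simp only [GG]; ring
  · rw [GG, abs_mul, abs_pow, abs_neg, abs_one, one_pow, one_mul]
    exact FF_bdd m hm n _ (by linarith) (by linarith)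
  · simpa [GG] using (FF_lim m hm (1 - x) (by linarith) (by linarith)).const_mul ((-1 : ℝ) ^ (m + 1))

lemma FF1_zero (n) : FF 1 n 0 = 0 := by simp [FF1, F1]
lemma FF1_one (n) : FF 1 n 1 = 0 := by simp [FF1, F1]
lemma FF3_zero (n) : FF 3 n 0 = -1 := by simp [FF3, F3]; ring
lemma FF3_one (n) : FF 3 n 1 = 0 := by simp [FF3, F3]

noncomputable def U (G₀ G₁ : (Fin 2 → ℝ) → ℝ) (n : ℕ) : (Fin 3 → ℝ) → ℝ :=
  fun p => T (FF 0 n) G₀ p + T (GG 0 n) G₁ p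

noncomputable def H (G₀ G₁ : (Fin 2 → ℝ) → ℝ) (n : ℕ) (i j : Fin 3) : (Fin 3 → ℝ) → ℝ :=
  if i = j then U G₀ G₁ n else fun _ => 0

section
variable {G₀ G₁ : (Fin 2 → ℝ) → ℝ}
  (s₀ : ContDiff ℝ (⊤ : ℕ∞) G₀) (s₁ : ContDiff ℝ (⊤ : ℕ∞) G₁)

lemma K_H (s₀ : ContDiff ℝ (⊤ : ℕ∞) G₀) (s₁ : ContDiff ℝ (⊤ : ℕ∞) G₁) (i j : Fin 3) :
    K 3 (fun n => H G₀ G₁ n i j) := by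
  by_cases h : i = j
  · simp only [H, h, if_true]
    exact (chainFF.KT s₀ 3 0 le_rfl).add (chainGG.KT s₁ 3 0 le_rfl)
  · simp only [H, h, if_false]
    exact K.zero 3

lemma K_ham (s₀ : ContDiff ℝ (⊤ : ℕ∞) G₀) (s₁ : ContDiff ℝ (⊤ : ℕ∞) G₁) :
    K 1 (fun n => hamT (H G₀ G₁ n)) := by
  unfold hamT
  refine K.half (K.sub (K.sum _ fun i _ => K.sum _ fun j _ => ?_)
    (K.sum _ fun i _ => K.sum _ fun j _ => ?_))
  · exact ((K_H s₀ s₁ i j).2 j).2 i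
  · exact ((K_H s₀ s₁ j j).2 i).2 i

lemma G_ric (s₀ : ContDiff ℝ (⊤ : ℕ∞) G₀) (s₁ : ContDiff ℝ (⊤ : ℕ∞) G₁) (i j : Fin 3) :
    Good (fun n => ricT (H G₀ G₁ n) i j) := by
  unfold ricT
  have : K 1 (fun n p => (∑ a, (pd i (pd a (H G₀ G₁ n j a)) p + pd j (pd a (H G₀ G₁ n i a)) p
    - pd a (pd a (H G₀ G₁ n i j)) p - pd i (pd j (H G₀ G₁ n a a)) p)) / 2) := by
    refine K.half (K.sum _ fun a _ => K.sub (K.sub (K.add ?_ ?_) ?_) ?_)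
    · exact ((K_H s₀ s₁ j a).2 a).2 i
    · exact ((K_H s₀ s₁ i a).2 a).2 j
    · exact ((K_H s₀ s₁ i j).2 a).2 a
    · exact ((K_H s₀ s₁ a a).2 j).2 i
  exact this.good

noncomputable def lap (f : ℕ → ℝ → ℝ) (G : (Fin 2 → ℝ) → ℝ) : (Fin 3 → ℝ) → ℝ := fun p =>
  T (f 2) G p + (T (f 0) (qd 0 (qd 0 G)) p + T (f 0) (qd 1 (qd 1 G)) p)

lemma ham_eq (s₀ : ContDiff ℝ (⊤ : ℕ∞) G₀) (s₁ : ContDiff ℝ (⊤ : ℕ∞) G₁) (n : ℕ) :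
    hamT (H G₀ G₁ n) = fun p => (-1) * (lap (fun m => FF m n) G₀ p + lap (fun m => GG m n) G₁ p) := by
  have a := FF_smooth 0 n
  have b := chainGG.smooth 0 n
  have d := fun m => FF_der m n
  have e := fun m => chainGG.der m n
  have U0 : pd 0 (pd 0 (U G₀ G₁ n)) = fun p => T (FF 2 n) G₀ p + T (GG 2 n) G₁ p := by
    unfold U
    rw [pd_add 0 (T_smooth a s₀) (T_smooth b s₁), pd0_T (d 0) s₀, pd0_T (e 0) s₁,
      pd_add 0 (T_smooth (FF_smooth _ _) s₀) (T_smooth (chainGG.smooth _ _) s₁),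
      pd0_T (d _) s₀, pd0_T (e _) s₁]
  have U1 : pd 1 (pd 1 (U G₀ G₁ n)) =
      fun p => T (FF 0 n) (qd 0 (qd 0 G₀)) p + T (GG 0 n) (qd 0 (qd 0 G₁)) p := by
    unfold U
    rw [pd_add 1 (T_smooth a s₀) (T_smooth b s₁), pd1_T (d 0) s₀, pd1_T (e 0) s₁,
      pd_add 1 (T_smooth a (qd_smooth _ s₀)) (T_smooth b (qd_smooth _ s₁)),
      pd1_T (d 0) (qd_smooth _ s₀), pd1_T (e 0) (qd_smooth _ s₁)]
  have U2 : pd 2 (pd 2 (U G₀ G₁ n)) =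
      fun p => T (FF 0 n) (qd 1 (qd 1 G₀)) p + T (GG 0 n) (qd 1 (qd 1 G₁)) p := by
    unfold U
    rw [pd_add 2 (T_smooth a s₀) (T_smooth b s₁), pd2_T (d 0) s₀, pd2_T (e 0) s₁,
      pd_add 2 (T_smooth a (qd_smooth _ s₀)) (T_smooth b (qd_smooth _ s₁)),
      pd2_T (d 0) (qd_smooth _ s₀), pd2_T (e 0) (qd_smooth _ s₁)]
  funext p
  simp [hamT, H, Fin.sum_univ_three, pd_zero, U0, U1, U2, lap]
  ring

lemma lap_smooth {F G} (hF : Chain F) (s : ContDiff ℝ (⊤ : ℕ∞) G) (n : ℕ) :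
    ContDiff ℝ (⊤ : ℕ∞) (lap (fun m => F m n) G) :=
  (T_smooth (hF.smooth _ _) s).add ((T_smooth (hF.smooth _ _) (qd_smooth _ (qd_smooth _ s))).add
    (T_smooth (hF.smooth _ _) (qd_smooth _ (qd_smooth _ s))))

lemma lap_pd {F G} (hF : Chain F) (s : ContDiff ℝ (⊤ : ℕ∞) G) (n : ℕ) :
    pd 0 (lap (fun m => F m n) G) = fun p =>
      T (F 3 n) G p + (T (F 1 n) (qd 0 (qd 0 G)) p + T (F 1 n) (qd 1 (qd 1 G)) p) := by
  have s0 := qd_smooth 0 (qd_smooth 0 s)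
  have s1 := qd_smooth 1 (qd_smooth 1 s)
  have a := T_smooth (hF.smooth 0 n) s0
  have b := T_smooth (hF.smooth 0 n) s1
  unfold lap
  rw [pd_add 0 (T_smooth (hF.smooth _ _) s) (a.add b), pd_add 0 a b, pd0_T (hF.der 2 n) s,
    pd0_T (hF.der 0 n) s0, pd0_T (hF.der 0 n) s1]

lemma ham_pd (s₀ : ContDiff ℝ (⊤ : ℕ∞) G₀) (s₁ : ContDiff ℝ (⊤ : ℕ∞) G₁) (n : ℕ) (p) :
    pd 0 (hamT (H G₀ G₁ n)) p = (-1) *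
     ((T (FF 3 n) G₀ p + (T (FF 1 n) (qd 0 (qd 0 G₀)) p + T (FF 1 n) (qd 1 (qd 1 G₀)) p)) +
      (T (GG 3 n) G₁ p + (T (GG 1 n) (qd 0 (qd 0 G₁)) p + T (GG 1 n) (qd 1 (qd 1 G₁)) p))) := by
  have a := lap_smooth chainFF s₀ n
  have b := lap_smooth chainGG s₁ n
  rw [ham_eq s₀ s₁, pd_cmul 0 _ (a.add b), pd_add 0 a b, lap_pd chainFF s₀, lap_pd chainGG s₁]
end

/-- For every `ε > 0` and smooth doubly periodic boundary data
`G₀, G₁ : ℝ² → ℝ` there is a symmetric smooth periodic tensor field `h` with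
`∂₁(Ham h) = G₀` on `x = 0` and `= G₁` on `x = 1`, whose `H¹` norm, together with the
`L²` norm of `Ric h` and the `H¹` norm of `Ham h`, is smaller than `ε`. -/
theorem stmt14 (ε : ℝ) (hε : 0 < ε) (G₀ G₁ : (Fin 2 → ℝ) → ℝ)
    (hG₀s : ContDiff ℝ (⊤ : ℕ∞) G₀) (hG₁s : ContDiff ℝ (⊤ : ℕ∞) G₁)
    (hG₀p : PerBoth G₀) (hG₁p : PerBoth G₁) :
    ∃ h : Fin 3 → Fin 3 → (Fin 3 → ℝ) → ℝ,
      (∀ i j, h i j = h j i) ∧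
      (∀ i j, ContDiff ℝ (⊤ : ℕ∞) (h i j)) ∧
      (∀ i j, PerYZ (h i j)) ∧
      (∀ p : Fin 3 → ℝ, p 0 = 0 → pd 0 (hamT h) p = G₀ ![p 1, p 2]) ∧
      (∀ p : Fin 3 → ℝ, p 0 = 1 → pd 0 (hamT h) p = G₁ ![p 1, p 2]) ∧
      (∫ p in Cube, ∑ i, ∑ j, ((h i j p) ^ 2 + ∑ l, (pd l (h i j) p) ^ 2)) < ε ^ 2 ∧
      (∫ p in Cube, ∑ i, ∑ j, (ricT h i j p) ^ 2) < ε ^ 2 ∧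
      (∫ p in Cube, ((hamT h p) ^ 2 + ∑ l, (pd l (hamT h) p) ^ 2)) < ε ^ 2 := by
  obtain ⟨n, hn1, hn2, hn3⟩ : ∃ n,
      (∫ p in Cube, ∑ i, ∑ j, ((H G₀ G₁ n i j p) ^ 2 + ∑ l, (pd l (H G₀ G₁ n i j) p) ^ 2)) < ε ^ 2 ∧
      (∫ p in Cube, ∑ i, ∑ j, (ricT (H G₀ G₁ n) i j p) ^ 2) < ε ^ 2 ∧
      (∫ p in Cube, ((hamT (H G₀ G₁ n) p) ^ 2 + ∑ l, (pd l (hamT (H G₀ G₁ n)) p) ^ 2)) < ε ^ 2 := by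
    have hε2 : (0:ℝ) < ε ^ 2 := by positivity
    have t1 : Good (fun n p => ∑ i, ∑ j, ((H G₀ G₁ n i j p) ^ 2
        + ∑ l, (pd l (H G₀ G₁ n i j) p) ^ 2)) :=
      Good.sum _ fun i _ => Good.sum _ fun j _ => (K_H hG₀s hG₁s i j).good.sq.add
        (Good.sum _ fun l _ => ((K_H hG₀s hG₁s i j).2 l).good.sq)
    have t2 : Good (fun n p => ∑ i, ∑ j, (ricT (H G₀ G₁ n) i j p) ^ 2) :=
      Good.sum _ fun i _ => Good.sum _ fun j _ => (G_ric hG₀s hG₁s i j).sq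
    have t3 : Good (fun n p => (hamT (H G₀ G₁ n) p) ^ 2
        + ∑ l, (pd l (hamT (H G₀ G₁ n)) p) ^ 2) :=
      (K_ham hG₀s hG₁s).good.sq.add
        (Good.sum _ fun l _ => ((K_ham hG₀s hG₁s).2 l).good.sq)
    exact ((t1.integral.eventually_lt_const hε2).and
      ((t2.integral.eventually_lt_const hε2).and (t3.integral.eventually_lt_const hε2))).exists
  refine ⟨H G₀ G₁ n, fun i j => ?_, fun i j => (K_H hG₀s hG₁s i j).good.1 n, fun i j => ?_,
    fun p hp => ?_, fun p hp => ?_, hn1, hn2, hn3⟩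
  · simp only [H, eq_comm]
  · by_cases h : i = j
    · simp only [H, h, if_true]
      intro p
      simp only [U, (T_per hG₀p p).1, (T_per hG₀p p).2, (T_per hG₁p p).1, (T_per hG₁p p).2]
      simp
    · simp only [H, h, if_false]
      intro p
      simp
  · rw [ham_pd hG₀s hG₁s]
    simp [T, hp, GG, FF1_zero, FF1_one, FF3_zero, FF3_one]
  · rw [ham_pd hG₀s hG₁s]
    simp [T, hp, GG, FF1_zero, FF1_one, FF3_zero, FF3_one]
    norm_num
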